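/- There are exactly 28 conjugacy classes of finite-index subgroups Γ̄ of PSL(2,ℤ) that have genus zero and satisfy n + 3·e₂(Γ̄) + 2·e₃(Γ̄) = 12, where n is the index of Γ̄. Among these 28 classes: exactly 6 are torsion-free; exactly 14 satisfy e₂(Γ̄) > 0; exactly 4 satisfy e₂(Γ̄) = 0 and e₃(Γ̄) = 1; exactly 3 satisfy e₂(Γ̄) = 0 and e₃(Γ̄) = 2; and exactly 1 satisfies e₂(Γ̄) = 0 and e₃(Γ̄) = 3. -/

import Mathlib

open Matrix

/-- `SL(2,ℤ)`: the group of 2×2 integer matrices of determinant 1. -/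
abbrev SL2Z := Matrix.SpecialLinearGroup (Fin 2) ℤ

instance : Fact (Even (Fintype.card (Fin 2))) := ⟨by simp⟩

/-- The subgroup `{±I}` of `SL(2,ℤ)`. -/
def pmOne : Subgroup SL2Z := Subgroup.zpowers (-1 : SL2Z)

instance : pmOne.Normal := by
  constructor
  intro x hx g
  obtain ⟨n, rfl⟩ := hx
  have h : Commute ((-1 : SL2Z) ^ n) g := (Commute.neg_one_left g).zpow_left n
  refine ⟨n, ?_⟩
  rw [← h.eq, mul_assoc, mul_inv_cancel, mul_one]

/-- `PSL(2,ℤ)`, the modular group, as the quotient of `SL(2,ℤ)` by `{±I}`. -/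
abbrev PSL2Z := SL2Z ⧸ pmOne

/-- The natural projection `ξ : SL(2,ℤ) → PSL(2,ℤ)`. -/
def xi : SL2Z →* PSL2Z := QuotientGroup.mk' pmOne

/-- The element `S` of `PSL(2,ℤ)`, the image of `[[0,-1],[1,0]]`. -/
def Sp : PSL2Z := xi ⟨!![0, -1; 1, 0], by norm_num [Matrix.det_fin_two_of]⟩

/-- The element `T` of `PSL(2,ℤ)`, the image of `[[1,1],[0,1]]`. -/
def Tp : PSL2Z := xi ⟨!![1, 1; 0, 1], by norm_num [Matrix.det_fin_two_of]⟩

/-- The number of left cosets in `PSL(2,ℤ)/Γ` fixed by `g` (for the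
left-multiplication action).  For `g = S` this is `e₂(Γ)`, for `g = S*T` it is `e₃(Γ)`. -/
noncomputable def nFix (g : PSL2Z) (Γ : Subgroup PSL2Z) : ℕ :=
  Nat.card {x : PSL2Z ⧸ Γ // g • x = x}

/-- The number of orbits of the cyclic subgroup generated by `g` on `PSL(2,ℤ)/Γ`.
For `g = S, S*T, T` these are `c₂(Γ), c₃(Γ), h(Γ)` respectively. -/
noncomputable def nOrb (g : PSL2Z) (Γ : Subgroup PSL2Z) : ℕ :=
  Nat.card (MulAction.orbitRel.Quotient (Subgroup.zpowers g) (PSL2Z ⧸ Γ))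

/-- `Γ` has genus zero: `c₂(Γ) + c₃(Γ) + h(Γ) = index(Γ) + 2`. -/
def GenusZero (Γ : Subgroup PSL2Z) : Prop :=
  nOrb Sp Γ + nOrb (Sp * Tp) Γ + nOrb Tp Γ = Γ.index + 2

/-- `Γ` is torsion free: it contains no nontrivial element of finite order. -/
def TorsionFree (Γ : Subgroup PSL2Z) : Prop :=
  ∀ x ∈ Γ, x ≠ 1 → ¬ IsOfFinOrder x

/-- Two subgroups of a group are conjugate. -/
def SubgroupConj {G : Type*} [Group G] (H K : Subgroup G) : Prop :=
  ∃ g : G, Subgroup.map (MulAut.conj g).toMonoidHom H = K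

/-- The number of conjugacy classes of subgroups of `PSL(2,ℤ)` satisfying `P`. -/
noncomputable def countClasses (P : Subgroup PSL2Z → Prop) : ℕ :=
  Nat.card (Quot fun A B : {Γ : Subgroup PSL2Z // P Γ} => SubgroupConj A.1 B.1)

/-- The index of the torsion free subgroup `Γ^tf` associated to `Γ`:
`index(Γ) + 3·e₂(Γ) + 2·e₃(Γ)`. -/
noncomputable def tfIdx (Γ : Subgroup PSL2Z) : ℕ :=
  Γ.index + 3 * nFix Sp Γ + 2 * nFix (Sp * Tp) Γ

/-
Conjugacy classes of subgroups of finite index correspond to isomorphism classes of finite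
transitive sets with the actions of `S` and `U = S * T`, because `PSL(2,ℤ)` is the free product of
the groups of orders two and three that these generate. The quantity `n + 3 * e₂ + 2 * e₃` is the
weight of such a set, and it can only grow while a partial table of the two actions is completed, so
a backtracking search over the tables of weight at most `12` meets every class. Its results of
weight `12` and genus zero are isomorphic to `28` tables, which are told apart by the numbers of
fixed points of a few words in the generators.

The free product property is used in this form: an element of a group generated by `s` and `u`, with
`s * s = 1` and `u ^ 3 = 1`, is conjugate to a power of a generator or to a word in `s * u` and
`s * u⁻¹`, and such a word in `S` and `U` is the class of a matrix with nonnegative entries, hence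
nontrivial unless it is empty. It also shows that the elements of finite order in `PSL(2,ℤ)` are the
conjugates of powers of the generators, so that a subgroup is torsion-free exactly when
`e₂ = e₃ = 0`.
-/

section Words

variable {G H : Type*} [Group G] [Group H] {s u : G}

/-- The product of the elements `s * u` and `s * u⁻¹`, in the order given by the exponents `L`. If
`s` has order two and `u` order three, these are the words alternating between `s` and `u`, `u⁻¹`
that begin with `s` and do not end with it. -/
def word (s u : G) (L : List ℤˣ) : G := (L.map fun ε : ℤˣ => s * u ^ (ε : ℤ)).prod

theorem word_cons (ε : ℤˣ) (L : List ℤˣ) : word s u (ε :: L) = s * u ^ (ε : ℤ) * word s u L := by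
  simp [word]

theorem map_word (f : G →* H) (L : List ℤˣ) : f (word s u L) = word (f s) (f u) L := by
  simp [word, map_list_prod, Function.comp_def]

theorem word_flatten_replicate (L : List ℤˣ) (n : ℕ) :
    word s u (List.replicate n L).flatten = word s u L ^ n := by
  simp [word, List.map_flatten, List.prod_flatten]

/-- The normal forms for the conjugacy classes of a group generated by `s` and `u` of orders two and
three: the cyclically reduced words, up to rotation. -/
def CyclicallyReduced (s u g : G) : Prop :=
  g = 1 ∨ g = s ∨ (∃ ε : ℤˣ, g = u ^ (ε : ℤ)) ∨ ∃ L ≠ [], g = word s u L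

theorem isConj_mul_comm (a b : G) : IsConj (a * b) (b * a) :=
  isConj_iff.2 ⟨b, by group⟩

theorem mul_zpow_unit_cases (hu : u ^ 3 = 1) (ε : ℤˣ) :
    u * u ^ (ε : ℤ) = u⁻¹ ∨ u * u ^ (ε : ℤ) = 1 := by
  obtain rfl | rfl := Int.units_eq_one_or ε
  · left
    exact eq_inv_of_mul_eq_one_left (by simpa [pow_succ] using hu)
  · right
    simp

theorem closure_pair_induction (hs : s * s = 1) (hu : u ^ 3 = 1) {P : G → Prop} (one : P 1)
    (mul_s : ∀ g, P g → P (s * g)) (mul_u : ∀ g, P g → P (u * g)) {g : G}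
    (hg : g ∈ Subgroup.closure {s, u}) : P g := by
  induction hg using Subgroup.closure_induction_left with
  | one => exact one
  | mul_left x hx g _ ih =>
    obtain rfl | rfl := hx
    exacts [mul_s g ih, mul_u g ih]
  | inv_mul_cancel x hx g _ ih =>
    obtain hx | hx : x = s ∨ x = u := hx
    · rw [hx, inv_eq_of_mul_eq_one_left hs]
      exact mul_s g ih
    · rw [hx, inv_eq_of_mul_eq_one_left (show u * u * u = 1 by rw [← pow_three', hu]), mul_assoc]
      exact mul_u _ (mul_u _ ih)

theorem exists_eq_word_mul_pow (hs : s * s = 1) (hu : u ^ 3 = 1) {g : G}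
    (hg : g ∈ Subgroup.closure {s, u}) : ∃ (L : List ℤˣ) (j : ℕ),
      g = word s u L * s ^ j ∨ g = s * word s u L * s ^ j := by
  have s_mul_s (x : G) : s * (s * x) = x := by rw [← mul_assoc, hs, one_mul]
  let P (g : G) := ∃ (L : List ℤˣ) (j : ℕ), g = word s u L * s ^ j ∨ g = s * word s u L * s ^ j
  have mul_s (g : G) : P g → P (s * g) := by
    rintro ⟨L, j, rfl | rfl⟩
    · exact ⟨L, j, .inr (mul_assoc ..).symm⟩
    · exact ⟨L, j, .inl (by rw [mul_assoc, s_mul_s])⟩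
  have mul_u (g : G) : P g → P (u * g) := by
    rintro ⟨L, j, rfl | rfl⟩
    · exact ⟨1 :: L, j, .inr (by simp [word_cons, mul_assoc, s_mul_s])⟩
    cases L with
    | nil => exact ⟨[1], j + 1, .inr (by simp [word, pow_succ', s_mul_s])⟩
    | cons ε L =>
      have absorb : u * (s * word s u (ε :: L) * s ^ j) =
          u * u ^ (ε : ℤ) * (word s u L * s ^ j) := by
        simp only [word_cons, mul_assoc, s_mul_s]
      obtain h | h := mul_zpow_unit_cases hu ε <;> rw [absorb, h]
      · exact ⟨-1 :: L, j, .inr (by simp [word_cons, mul_assoc, s_mul_s])⟩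
      · exact ⟨L, j, .inl (one_mul _)⟩
  exact closure_pair_induction hs hu ⟨[], 0, .inl (by simp [word])⟩ mul_s mul_u hg

theorem exists_isConj_mul_word (hs : s * s = 1) (hu : u ^ 3 = 1) (L : List ℤˣ) :
    ∃ h, CyclicallyReduced s u h ∧ IsConj (s * word s u L) h := by
  have s_mul_s (x : G) : s * (s * x) = x := by rw [← mul_assoc, hs, one_mul]
  induction L using List.bidirectionalRec with
  | nil => exact ⟨s, .inr (.inl rfl), by rw [word, List.map_nil, List.prod_nil, mul_one]⟩
  | singleton ε =>
    exact ⟨_, .inr (.inr (.inl ⟨ε, rfl⟩)), by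
      rw [word, List.map_singleton, List.prod_singleton, s_mul_s]⟩
  | cons_append ε L δ ih =>
    have comm : IsConj (s * word s u (ε :: (L ++ [δ])))
        (s * (u ^ (δ : ℤ) * u ^ (ε : ℤ) * word s u L)) := by
      refine isConj_iff.2 ⟨s * u ^ (δ : ℤ), ?_⟩
      simp [word, mul_assoc, s_mul_s]
    obtain rfl | rfl : δ = ε ∨ δ = -ε :=
      (Int.isUnit_eq_or_eq_neg δ.isUnit ε.isUnit).imp Units.ext Units.ext
    · refine ⟨word s u (-δ :: L), .inr (.inr (.inr ⟨_, List.cons_ne_nil _ _, rfl⟩)), ?_⟩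
      have : u ^ (δ : ℤ) * u ^ (δ : ℤ) = u ^ ((-δ : ℤˣ) : ℤ) := by
        rw [Units.val_neg, _root_.zpow_neg, eq_inv_iff_mul_eq_one, ← pow_three', ← zpow_natCast,
          zpow_comm, zpow_natCast, hu, _root_.one_zpow]
      rwa [this, ← mul_assoc, ← word_cons] at comm
    · obtain ⟨h, hred, hconj⟩ := ih
      exact ⟨h, hred, comm.trans (by simpa using hconj)⟩

theorem exists_isConj_cyclicallyReduced (hs : s * s = 1) (hu : u ^ 3 = 1) {g : G}
    (hg : g ∈ Subgroup.closure {s, u}) : ∃ h, CyclicallyReduced s u h ∧ IsConj g h := by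
  obtain ⟨L, n, hconj⟩ : ∃ (L : List ℤˣ) (n : ℕ), IsConj g (s ^ n * word s u L) := by
    obtain ⟨L, j, rfl | rfl⟩ := exists_eq_word_mul_pow hs hu hg
    · exact ⟨L, j, isConj_mul_comm _ _⟩
    · exact ⟨L, j + 1, by simpa only [pow_succ, mul_assoc] using isConj_mul_comm (s * word s u L) _⟩
  obtain ⟨k, rfl | rfl⟩ := n.even_or_odd'
  · rw [pow_mul, sq, hs, one_pow, one_mul] at hconj
    obtain rfl | hL := eq_or_ne L []
    · exact ⟨1, .inl rfl, hconj⟩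
    · exact ⟨_, .inr (.inr (.inr ⟨L, hL, rfl⟩)), hconj⟩
  · rw [pow_succ, pow_mul, sq, hs, one_pow, one_mul] at hconj
    obtain ⟨h, hred, hconj'⟩ := exists_isConj_mul_word hs hu L
    exact ⟨h, hred, hconj.trans hconj'⟩

end Words

section ModularGroup

/-- The element `U = S * T` of order three, which generates `PSL(2,ℤ)` together with `S`. -/
def Up : PSL2Z := Sp * Tp

theorem xi_eq_one_iff {M : SL2Z} : xi M = 1 ↔ M = 1 ∨ M = -1 := by
  rw [xi, QuotientGroup.mk'_apply, QuotientGroup.eq_one_iff, pmOne]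
  constructor
  · rintro ⟨k, rfl⟩
    exact k.even_or_odd.imp Even.neg_one_zpow Odd.neg_one_zpow
  · rintro (rfl | rfl)
    exacts [one_mem _, Subgroup.mem_zpowers _]

theorem Sp_eq_xi : Sp = xi ModularGroup.S := rfl

theorem Tp_eq_xi : Tp = xi ModularGroup.T := rfl

theorem Sp_mul_Sp : Sp * Sp = 1 := by
  rw [Sp_eq_xi, ← map_mul, xi_eq_one_iff]
  decide

theorem Up_pow_three : Up ^ 3 = 1 := by
  rw [Up, Sp_eq_xi, Tp_eq_xi, ← map_mul, ← map_pow, xi_eq_one_iff]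
  decide

theorem Sp_mul_Up : Sp * Up = Tp := by
  rw [Up, ← mul_assoc, Sp_mul_Sp, one_mul]

theorem Sp_ne_one : Sp ≠ 1 := by
  rw [Sp_eq_xi, Ne, xi_eq_one_iff]
  decide

theorem Up_ne_one : Up ≠ 1 := by
  rw [Up, Sp_eq_xi, Tp_eq_xi, ← map_mul, Ne, xi_eq_one_iff]
  decide

theorem Up_zpow_unit_ne_one (ε : ℤˣ) : Up ^ (ε : ℤ) ≠ 1 := by
  obtain rfl | rfl := Int.units_eq_one_or ε <;> simpa using Up_ne_one

theorem closure_Sp_Up : Subgroup.closure {Sp, Up} = ⊤ := by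
  have hST := congrArg (Subgroup.map xi) SpecialLinearGroup.SL2Z_generators
  rw [MonoidHom.map_closure, Subgroup.map_top_of_surjective xi
    (QuotientGroup.mk'_surjective pmOne), Set.image_pair, ← Sp_eq_xi, ← Tp_eq_xi] at hST
  have hS : Sp ∈ Subgroup.closure {Sp, Up} := Subgroup.subset_closure (by simp)
  have hU : Up ∈ Subgroup.closure {Sp, Up} := Subgroup.subset_closure (by simp)
  rw [eq_top_iff, ← hST, Subgroup.closure_le, Set.pair_subset_iff, ← Sp_mul_Up]
  exact ⟨hS, mul_mem hS hU⟩

/-- Entrywise domination of the identity matrix, with an off-diagonal entry to spare. The matrices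
of nonempty words in `S * U` and `S * U⁻¹` have this property, while `1` and `-1` do not. -/
def IsPositive (M : SL2Z) : Prop :=
  1 ≤ M 0 0 ∧ 0 ≤ M 0 1 ∧ 0 ≤ M 1 0 ∧ 1 ≤ M 1 1 ∧ 0 < M 0 1 + M 1 0

theorem IsPositive.xi_ne_one {M : SL2Z} (h : IsPositive M) : xi M ≠ 1 := by
  rw [Ne, xi_eq_one_iff]
  rintro (rfl | rfl) <;> simp [IsPositive] at h

theorem IsPositive.mul {M N : SL2Z} (hM : IsPositive M) (hN : IsPositive N) :
    IsPositive (M * N) := by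
  obtain ⟨hM₀₀, hM₀₁, hM₁₀, hM₁₁, hM⟩ := hM
  obtain ⟨hN₀₀, hN₀₁, hN₁₀, hN₁₁, -⟩ := hN
  simp only [IsPositive, Matrix.SpecialLinearGroup.coe_mul, Matrix.mul_apply, Fin.sum_univ_two]
  refine ⟨?_, ?_, ?_, ?_, ?_⟩ <;> nlinarith [mul_nonneg hM₀₁ hN₁₀, mul_nonneg hM₁₀ hN₀₁]

theorem exists_isPositive_xi_eq (ε : ℤˣ) : ∃ M, IsPositive M ∧ xi M = Sp * Up ^ (ε : ℤ) := by
  obtain rfl | rfl := Int.units_eq_one_or ε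
  · refine ⟨ModularGroup.T, by simp [IsPositive, ModularGroup.T], ?_⟩
    rw [Units.val_one, zpow_one, Sp_mul_Up, Tp_eq_xi]
  · refine ⟨ModularGroup.T * ModularGroup.S * ModularGroup.T, by unfold IsPositive; decide, ?_⟩
    have hU : Up⁻¹ = Up * Up := inv_eq_of_mul_eq_one_left (by rw [← pow_three', Up_pow_three])
    rw [map_mul, map_mul, ← Tp_eq_xi, ← Sp_eq_xi, Units.val_neg, Units.val_one,
      _root_.zpow_neg_one, hU, ← mul_assoc, Sp_mul_Up, Up, mul_assoc]

theorem word_Sp_Up_ne_one {L : List ℤˣ} (hL : L ≠ []) : word Sp Up L ≠ 1 := by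
  suffices ∃ M, IsPositive M ∧ xi M = word Sp Up L by
    obtain ⟨M, hM, h⟩ := this
    exact h ▸ hM.xi_ne_one
  induction L, hL using List.recNeNil with
  | singleton ε => simpa [word] using exists_isPositive_xi_eq ε
  | cons ε L _ ih =>
    obtain ⟨M, hM, hMx⟩ := exists_isPositive_xi_eq ε
    obtain ⟨N, hN, hNx⟩ := ih
    exact ⟨M * N, hM.mul hN, by rw [map_mul, hMx, hNx, word_cons]⟩

theorem eq_one_of_map_eq_one {G : Type*} [Group G] {s u : G} (hs : s * s = 1) (hu : u ^ 3 = 1)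
    (f : G →* PSL2Z) (hfs : f s = Sp) (hfu : f u = Up) {g : G} (hg : g ∈ Subgroup.closure {s, u})
    (hfg : f g = 1) : g = 1 := by
  obtain ⟨h, hred, hconj⟩ := exists_isConj_cyclicallyReduced hs hu hg
  have hfh : f h = 1 := isConj_one_right.1 (hfg ▸ f.map_isConj hconj)
  obtain rfl | rfl | ⟨ε, rfl⟩ | ⟨L, hL, rfl⟩ := hred
  · exact isConj_one_left.1 hconj
  · exact absurd (hfs.symm.trans hfh) Sp_ne_one
  · exact absurd (by rw [← hfu, ← map_zpow, hfh]) (Up_zpow_unit_ne_one ε)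
  · exact absurd (by rw [← hfs, ← hfu, ← map_word, hfh]) (word_Sp_Up_ne_one hL)

theorem exists_hom {G : Type*} [Group G] {s u : G} (hs : s * s = 1) (hu : u ^ 3 = 1) :
    ∃ f : PSL2Z →* G, f Sp = s ∧ f Up = u := by
  let K : Subgroup (PSL2Z × G) := Subgroup.closure {(Sp, s), (Up, u)}
  let π : K →* PSL2Z := (MonoidHom.fst PSL2Z G).comp K.subtype
  have hsK : (Sp, s) ∈ K := Subgroup.subset_closure (by simp)
  have huK : (Up, u) ∈ K := Subgroup.subset_closure (by simp)
  have hinj : Function.Injective π := (injective_iff_map_eq_one π).2 fun k hk =>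
    Subtype.ext <| eq_one_of_map_eq_one (Prod.ext Sp_mul_Sp hs) (Prod.ext Up_pow_three hu)
      (MonoidHom.fst PSL2Z G) rfl rfl k.2 hk
  have hsurj : Function.Surjective π := by
    rw [← MonoidHom.range_eq_top, eq_top_iff, ← closure_Sp_Up, Subgroup.closure_le,
      Set.pair_subset_iff]
    exact ⟨⟨⟨_, hsK⟩, rfl⟩, ⟨⟨_, huK⟩, rfl⟩⟩
  let e := MulEquiv.ofBijective π ⟨hinj, hsurj⟩
  refine ⟨((MonoidHom.snd PSL2Z G).comp K.subtype).comp e.symm.toMonoidHom, ?_, ?_⟩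
  · exact congrArg (fun k : K => k.1.2) (e.symm_apply_apply ⟨_, hsK⟩)
  · exact congrArg (fun k : K => k.1.2) (e.symm_apply_apply ⟨_, huK⟩)

theorem exists_isConj_generator_of_isOfFinOrder {x : PSL2Z} (hx : x ≠ 1) (hfin : IsOfFinOrder x) :
    IsConj x Sp ∨ ∃ ε : ℤˣ, IsConj x (Up ^ (ε : ℤ)) := by
  obtain ⟨h, hred, hconj⟩ := exists_isConj_cyclicallyReduced Sp_mul_Sp Up_pow_three
    (closure_Sp_Up ▸ Subgroup.mem_top x)
  obtain rfl | rfl | ⟨ε, rfl⟩ | ⟨L, hL, rfl⟩ := hred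
  · exact absurd (isConj_one_left.1 hconj) hx
  · exact .inl hconj
  · exact .inr ⟨ε, hconj⟩
  · obtain ⟨n, hn, hpow⟩ := isOfFinOrder_iff_pow_eq_one.1 hfin
    have : word Sp Up L ^ n = 1 := isConj_one_right.1 (hpow ▸ hconj.pow n)
    rw [← word_flatten_replicate] at this
    exact absurd this (word_Sp_Up_ne_one (by simp [hL, hn.ne']))

theorem nFix_eq_zero_iff {g : PSL2Z} {Γ : Subgroup PSL2Z} (hΓ : Γ.index ≠ 0) :
    nFix g Γ = 0 ↔ ∀ h ∈ Γ, ¬ IsConj g h := by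
  have : Γ.FiniteIndex := ⟨hΓ⟩
  have hfix (c : PSL2Z) : g • (c : PSL2Z ⧸ Γ) = c ↔ c⁻¹ * g * c ∈ Γ := by
    rw [eq_comm, MulAction.Quotient.smul_coe, QuotientGroup.eq, smul_eq_mul, mul_assoc]
  rw [nFix, Finite.card_eq_zero_iff, isEmpty_subtype, QuotientGroup.forall_mk]
  simp only [hfix, isConj_iff, not_exists]
  constructor
  · rintro hg _ hh c rfl
    exact hg c⁻¹ (by simpa using hh)
  · exact fun hg c hc => hg _ hc c⁻¹ (by group)

theorem torsionFree_iff {Γ : Subgroup PSL2Z} (hΓ : Γ.index ≠ 0) :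
    TorsionFree Γ ↔ nFix Sp Γ = 0 ∧ nFix Up Γ = 0 := by
  rw [nFix_eq_zero_iff hΓ, nFix_eq_zero_iff hΓ]
  constructor
  · have hfinS : IsOfFinOrder Sp := isOfFinOrder_iff_pow_eq_one.2 ⟨2, two_pos, sq Sp ▸ Sp_mul_Sp⟩
    have hfinU : IsOfFinOrder Up := isOfFinOrder_iff_pow_eq_one.2 ⟨3, three_pos, Up_pow_three⟩
    have not_isConj {g : PSL2Z} (hg : g ≠ 1) (hfin : IsOfFinOrder g) (hΓ : TorsionFree Γ) :
        ∀ h ∈ Γ, ¬ IsConj g h := fun h hh hconj =>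
      hΓ h hh (fun h1 => hg (isConj_one_left.1 (h1 ▸ hconj))) (hconj.isOfFinOrder hfin)
    exact fun h => ⟨not_isConj Sp_ne_one hfinS h, not_isConj Up_ne_one hfinU h⟩
  · rintro ⟨hS, hU⟩ x hx hx1 hfin
    obtain h | ⟨ε, h⟩ := exists_isConj_generator_of_isOfFinOrder hx1 hfin
    · exact hS x hx h.symm
    · obtain ⟨c, hc⟩ := isConj_iff.1 h
      refine hU (x ^ (ε : ℤ)) (zpow_mem hx _) (isConj_iff.2 ⟨c, ?_⟩).symm
      rw [← conj_zpow, hc, ← _root_.zpow_mul, Int.units_coe_mul_self, zpow_one]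

end ModularGroup

/-- A table of the actions of `S` and `U` on `{0, …, n - 1}`: row `i` holds the image of `i` under
`S`, or `none` while this image is still undetermined, and the image of `i` under `U`. -/
abbrev Table := List (Option ℕ × ℕ)

namespace Table

/-- The involution of a table; undetermined images are sent to the number of rows, which is not the
number of a row, so that they never count as fixed. -/
def s (t : Table) (i : ℕ) : ℕ :=
  match t[i]? with
  | some (some j, _) => j
  | _ => t.length

/-- The permutation of order three of a table, with the same junk value as `Table.s`. -/
def u (t : Table) (i : ℕ) : ℕ :=
  match t[i]? with
  | some (_, j) => j
  | none => t.length

/-- Every row of the table holds an image under `S`. -/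
def IsComplete (t : Table) : Prop := ∀ r ∈ t, r.1.isSome

instance (t : Table) : Decidable t.IsComplete := inferInstanceAs (Decidable (∀ r ∈ t, _))

/-- The table obtained by recording that `S` exchanges `i` and `j`. -/
def link (t : Table) (i j : ℕ) : Table :=
  (t.modify i fun r => (some j, r.2)).modify j fun r => (some i, r.2)

end Table

section Labels

variable {X Y : Type*} {σ υ : X → X} {σ' υ' : Y → Y} {t : Table} {L M : List X}

/-- The row `r` describes the images of the point `x` under `σ` and `υ`, where the `i`-th entry of
the list `L` is the point with number `i`. -/
def RowAt (σ υ : X → X) (L : List X) (x : X) (r : Option ℕ × ℕ) : Prop :=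
  (∀ j ∈ r.1, L[j]? = some (σ x)) ∧ L[r.2]? = some (υ x)

instance [DecidableEq X] (σ υ : X → X) (L : List X) (x : X) (r : Option ℕ × ℕ) :
    Decidable (RowAt σ υ L x r) :=
  inferInstanceAs (Decidable (_ ∧ _))

/-- The distinct points `L` of a set with maps `σ` and `υ` number the rows of the table `t` in such
a way that `t` describes `σ` and `υ` on these points. -/
structure Labels (σ υ : X → X) (t : Table) (L : List X) : Prop where
  nodup : L.Nodup
  rows : List.Forall₂ (RowAt σ υ L) L t

instance [DecidableEq X] (σ υ : X → X) (t : Table) (L : List X) : Decidable (Labels σ υ t L) :=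
  decidable_of_iff (List.Forall₂ (RowAt σ υ L) L t ∧ L.Nodup)
    ⟨fun h => ⟨h.2, h.1⟩, fun h => ⟨h.2, h.1⟩⟩

theorem index_inj {i j : ℕ} {x : X} (hL : L.Nodup) (hi : L[i]? = some x) (hj : L[j]? = some x) :
    i = j :=
  (List.getElem?_inj (List.getElem?_eq_some_iff.1 hi).1 hL).1 (hi.trans hj.symm)

theorem RowAt.append {x : X} {r : Option ℕ × ℕ} (h : RowAt σ υ L x r) : RowAt σ υ (L ++ M) x r :=
  have mono {j : ℕ} {y : X} (hj : L[j]? = some y) : (L ++ M)[j]? = some y := by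
    rw [List.getElem?_append_left (List.getElem?_eq_some_iff.1 hj).1, hj]
  ⟨fun j hj => mono (h.1 j hj), mono h.2⟩

theorem RowAt.map {f : X → Y} {x : X} {r : Option ℕ × ℕ} (hσ : f (σ x) = σ' (f x))
    (hυ : f (υ x) = υ' (f x)) (h : RowAt σ υ L x r) : RowAt σ' υ' (L.map f) (f x) r :=
  ⟨fun j hj => by rw [List.getElem?_map, h.1 j hj, Option.map_some, hσ],
    by rw [List.getElem?_map, h.2, Option.map_some, hυ]⟩

namespace Labels

theorem length_eq (h : Labels σ υ t L) : L.length = t.length := h.rows.length_eq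

theorem append {b : Table} (h : Labels σ υ t L) (hnodup : (L ++ M).Nodup)
    (hb : List.Forall₂ (RowAt σ υ (L ++ M)) M b) : Labels σ υ (t ++ b) (L ++ M) :=
  ⟨hnodup, List.rel_append (h.rows.imp fun _ _ => RowAt.append) hb⟩

theorem map {f : X → Y} (hf : Set.InjOn f {x | x ∈ L}) (hσ : ∀ x ∈ L, f (σ x) = σ' (f x))
    (hυ : ∀ x ∈ L, f (υ x) = υ' (f x)) (h : Labels σ υ t L) : Labels σ' υ' t (L.map f) :=
  ⟨h.nodup.map_on fun _ hx _ hy => hf hx hy,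
    List.forall₂_map_left_iff.2 <|
      ((List.forall₂_and_left _ _).2 ⟨fun _ hx => hx, h.rows⟩).imp fun x _ hx =>
        hx.2.map (hσ x hx.1) (hυ x hx.1)⟩

theorem exists_row {i : ℕ} {x : X} (h : Labels σ υ t L) (hx : L[i]? = some x) :
    ∃ r, t[i]? = some r ∧ RowAt σ υ L x r := by
  obtain ⟨hi, rfl⟩ := List.getElem?_eq_some_iff.1 hx
  have hi' : i < t.length := h.length_eq ▸ hi
  exact ⟨t[i], List.getElem?_eq_getElem hi', (List.forall₂_iff_get.1 h.rows).2 i hi hi'⟩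

theorem modify {i j : ℕ} {x : X} (h : Labels σ υ t L) (hx : L[i]? = some x)
    (hj : L[j]? = some (σ x)) : Labels σ υ (t.modify i fun r => (some j, r.2)) L := by
  refine ⟨h.nodup, List.forall₂_iff_get.2 ⟨by simp [h.length_eq], fun k hk hk' => ?_⟩⟩
  have ht : k < t.length := h.length_eq ▸ hk
  have hrow : RowAt σ υ L L[k] t[k] := (List.forall₂_iff_get.1 h.rows).2 k hk ht
  simp only [List.get_eq_getElem, List.getElem_modify]
  split_ifs with hik
  · subst hik
    obtain ⟨_, rfl⟩ := List.getElem?_eq_some_iff.1 hx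
    exact ⟨by simpa using hj, hrow.2⟩
  · exact hrow

theorem link {i j : ℕ} {x : X} (hσ : Function.Involutive σ) (h : Labels σ υ t L)
    (hx : L[i]? = some x) (hj : L[j]? = some (σ x)) : Labels σ υ (t.link i j) L :=
  (h.modify hx hj).modify hj ((hσ x).symm ▸ hx)

end Labels

/-- The map `f` on numbers describes the map `φ` on the points numbered by the list `L`. -/
def Tracks (L : List X) (f : ℕ → ℕ) (φ : X → X) : Prop :=
  ∀ ⦃i x⦄, L[i]? = some x → L[f i]? = some (φ x)

namespace Tracks

variable {f g : ℕ → ℕ} {φ ψ : X → X}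

theorem comp (hf : Tracks L f φ) (hg : Tracks L g ψ) : Tracks L (f ∘ g) (φ ∘ ψ) :=
  fun _ _ hx => hf (hg hx)

theorem iterate (hf : Tracks L f φ) : ∀ k : ℕ, Tracks L f^[k] φ^[k]
  | 0 => fun _ _ hx => hx
  | k + 1 => (hf.iterate k).comp hf

theorem mem (hf : Tracks L f φ) {x : X} (hx : x ∈ L) : φ x ∈ L := by
  obtain ⟨i, hi⟩ := List.mem_iff_getElem?.1 hx
  exact List.mem_of_getElem? (hf hi)

theorem apply_eq_iff (hL : L.Nodup) (hf : Tracks L f φ) {i : ℕ} {x : X} (hi : L[i]? = some x) :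
    f i = i ↔ φ x = x := by
  constructor
  · intro h
    simpa [h, hi, eq_comm] using hf hi
  · intro h
    exact index_inj hL (h ▸ hf hi) hi

end Tracks

namespace Labels

theorem tracks_u (h : Labels σ υ t L) : Tracks L t.u υ := by
  intro i x hx
  obtain ⟨r, hr, hrow⟩ := h.exists_row hx
  simpa only [Table.u, hr] using hrow.2

theorem tracks_s (h : Labels σ υ t L) (ht : t.IsComplete) : Tracks L t.s σ := by
  intro i x hx
  obtain ⟨⟨sr, ur⟩, hr, hrow⟩ := h.exists_row hx
  obtain ⟨j, rfl⟩ := Option.isSome_iff_exists.1 (ht _ (List.mem_of_getElem? hr))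
  simpa only [Table.s, hr] using hrow.1 j rfl

theorem apply_eq_of_s_eq {i : ℕ} {x : X} (h : Labels σ υ t L) (hx : L[i]? = some x)
    (hi : t.s i = i) : σ x = x := by
  obtain ⟨⟨sr, ur⟩, hr, hrow⟩ := h.exists_row hx
  cases sr with
  | none =>
    have hlen : t.length = i := by simpa only [Table.s, hr] using hi
    exact absurd (List.getElem?_eq_some_iff.1 hr).1 hlen.not_gt
  | some j =>
    obtain rfl : j = i := by simpa only [Table.s, hr] using hi
    simpa [hx, eq_comm] using hrow.1 j rfl

end Labels

end Labels

section Counting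

variable {X : Type*} {L : List X}

theorem getElem_subtype_injective (hL : L.Nodup) {p : ℕ → Prop} {q : X → Prop}
    (h : ∀ ⦃i x⦄, L[i]? = some x → p i → q x) :
    Function.Injective fun k : {k // k < L.length ∧ p k} =>
      (⟨L[k.1]'k.2.1, h (List.getElem?_eq_getElem k.2.1) k.2.2⟩ : {x // q x}) :=
  fun _ _ hjk => Subtype.ext ((hL.getElem_inj_iff).1 (congrArg Subtype.val hjk))

theorem count_le_card [Finite X] (hL : L.Nodup) {p : ℕ → Prop} [DecidablePred p] {q : X → Prop}
    (h : ∀ ⦃i x⦄, L[i]? = some x → p i → q x) : Nat.count p L.length ≤ Nat.card {x // q x} := by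
  let _ := Nat.CountSet.fintype p L.length
  rw [Nat.count_eq_card_fintype, ← Nat.card_eq_fintype_card]
  exact Nat.card_le_card_of_injective _ (getElem_subtype_injective hL h)

theorem count_eq_card (hL : L.Nodup) (hmem : ∀ x, x ∈ L) {p : ℕ → Prop} [DecidablePred p]
    {q : X → Prop} (h : ∀ ⦃i x⦄, L[i]? = some x → (p i ↔ q x)) :
    Nat.count p L.length = Nat.card {x // q x} := by
  let _ := Nat.CountSet.fintype p L.length
  rw [Nat.count_eq_card_fintype, ← Nat.card_eq_fintype_card]
  refine Nat.card_congr (Equiv.ofBijective _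
    ⟨getElem_subtype_injective hL fun i x hx => (h hx).1, fun ⟨x, hx⟩ => ?_⟩)
  obtain ⟨i, hi⟩ := List.mem_iff_getElem?.1 (hmem x)
  obtain ⟨hlt, hix⟩ := List.getElem?_eq_some_iff.1 hi
  exact ⟨⟨i, hlt, (h hi).2 hx⟩, Subtype.ext hix⟩

/-- The number of fixed points of `f` among `0, …, n - 1`. -/
def fixCount (f : ℕ → ℕ) (n : ℕ) : ℕ := Nat.count (fun i => f i = i) n

/-- The number of orbits of a permutation `f` of `0, …, n - 1`, counted by their least elements. -/
def orbCount (f : ℕ → ℕ) (n : ℕ) : ℕ :=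
  Nat.count (fun i => (List.iterate f i n).all (i ≤ ·)) n

theorem Tracks.fixCount_eq {f : ℕ → ℕ} {φ : X → X} (hL : L.Nodup) (hmem : ∀ x, x ∈ L)
    (hf : Tracks L f φ) : fixCount f L.length = Nat.card {x // φ x = x} :=
  count_eq_card hL hmem fun _ _ hx => hf.apply_eq_iff hL hx

variable {G : Type*} [Group G] [MulAction G X]

theorem card_orbitRel_quotient {rank : X → ℕ} (hrank : Function.Injective rank) :
    Nat.card (MulAction.orbitRel.Quotient G X) =
      Nat.card {x : X // ∀ g : G, rank x ≤ rank (g • x)} := by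
  refine (Nat.card_congr (Equiv.ofBijective
    (fun x => (Quotient.mk'' x.1 : MulAction.orbitRel.Quotient G X)) ⟨?_, ?_⟩)).symm
  · rintro ⟨x, hx⟩ ⟨y, hy⟩ hxy
    obtain ⟨g, rfl⟩ := MulAction.orbitRel_apply.1 (Quotient.exact hxy)
    exact Subtype.ext (hrank (le_antisymm (by simpa using hx g⁻¹) (hy g)))
  · refine fun c => Quotient.inductionOn' c fun x => ?_
    obtain ⟨g, hg⟩ : ∃ g : G, ∀ h : G, rank (g • x) ≤ rank (h • x) :=
      ⟨_, fun h => Function.argmin_le (fun g : G => rank (g • x)) h⟩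
    refine ⟨⟨g • x, fun h => ?_⟩, Quotient.sound' ⟨g, rfl⟩⟩
    rw [smul_smul]
    exact hg _

theorem exists_lt_card_zpow_smul_eq [Finite X] (g : G) (x : X) (k : ℤ) :
    ∃ m < Nat.card X, g ^ k • x = g ^ m • x := by
  have := Fintype.ofFinite X
  have hpos : 0 < MulAction.period g x := Function.minimalPeriod_pos_of_mem_periodicPts
    ((MulAction.injective g).mem_periodicPts x)
  obtain ⟨m, hm⟩ := Int.eq_ofNat_of_zero_le (Int.emod_nonneg k (Int.natCast_ne_zero.2 hpos.ne'))
  have hlt : m < MulAction.period g x := by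
    have := Int.emod_lt_of_pos k (Int.natCast_pos.2 hpos)
    omega
  refine ⟨m, hlt.trans_le ?_, ?_⟩
  · exact Nat.card_eq_fintype_card (α := X) ▸ Function.minimalPeriod_le_card
  · rw [← MulAction.zpow_mod_period_smul, hm, zpow_natCast]

theorem Tracks.orbCount_eq {f : ℕ → ℕ} {g : G} (hL : L.Nodup) (hmem : ∀ x, x ∈ L)
    (hf : Tracks L f (g • ·)) :
    orbCount f L.length = Nat.card (MulAction.orbitRel.Quotient (Subgroup.zpowers g) X) := by
  classical
  let e := hL.getEquivOfForallMemList L hmem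
  have : Finite X := .of_equiv _ e
  have hcard : Nat.card X = L.length := by rw [← Nat.card_congr e, Nat.card_fin]
  have idxOf_eq {i : ℕ} {x : X} (hx : L[i]? = some x) : L.idxOf x = i :=
    index_inj hL (List.getElem?_idxOf (hmem x)) hx
  have idxOf_pow_smul {i : ℕ} {x : X} (hx : L[i]? = some x) (m : ℕ) :
      L.idxOf (g ^ m • x) = f^[m] i :=
    idxOf_eq (by simpa only [smul_iterate] using hf.iterate m hx)
  rw [card_orbitRel_quotient (rank := L.idxOf) fun x y => (List.idxOf_inj (hmem x)).1]
  refine count_eq_card hL hmem fun i x hx => ?_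
  simp only [List.all_eq_true, List.mem_iterate, decide_eq_true_eq, idxOf_eq hx]
  constructor
  · rintro h ⟨_, k, rfl⟩
    obtain ⟨m, hm, hkm⟩ := exists_lt_card_zpow_smul_eq g x k
    have hle : i ≤ L.idxOf (g ^ k • x) := by
      rw [hkm, idxOf_pow_smul hx]
      exact h _ ⟨m, hcard ▸ hm, rfl⟩
    exact hle
  · rintro h _ ⟨m, -, rfl⟩
    exact idxOf_pow_smul hx m ▸ h ⟨g ^ m, Subgroup.npow_mem_zpowers g m⟩

end Counting

namespace Table

/-- The index of the associated torsion-free subgroup, read off the table of the action on cosets.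
-/
def weight (t : Table) : ℕ := t.length + 3 * fixCount t.s t.length + 2 * fixCount t.u t.length

/-- The possible cycles of `U` whose least member is `m`, with undetermined images under `S`. -/
def uCycles (m : ℕ) : List Table := [[(none, m)], [(none, m + 1), (none, m + 2), (none, m)]]

/-- The tables obtained from `t` by determining the image of `i` under the involution: it is `i`,
or another row whose image is undetermined, or the first row of a new cycle of `U`. -/
def children (t : Table) (i : ℕ) : List Table :=
  (((List.range t.length).filter fun j => t[j]?.any fun r => ∀ k ∈ r.1, k = i).map (t.link i)) ++
    (uCycles t.length).map fun b => link (t ++ b) i t.length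

/-- The tables of weight at most `N` obtained from `t` by determining the first undetermined image.
The weight never decreases along the way, so no completion of weight at most `N` is lost. -/
def step (N : ℕ) (t : Table) : List Table :=
  match t.findIdx? (·.1.isNone) with
  | none => [t]
  | some i => (t.children i).filter (weight · ≤ N)

/-- The tables of weight at most `N` obtained after `k` determinations of an image under `S`. -/
def search (N : ℕ) : ℕ → List Table
  | 0 => uCycles 0
  | k + 1 => (search N k).flatMap (step N)

end Table

section Search

variable {X : Type*} {σ υ : X → X} {t : Table} {L : List X}

theorem exists_labels_append_uCycle (hυ : ∀ x, υ (υ (υ x)) = x) (h : Labels σ υ t L) {x : X}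
    (hx : x ∉ L) : ∃ b ∈ Table.uCycles t.length, ∃ M,
      Labels σ υ (t ++ b) (L ++ M) ∧ (L ++ M)[t.length]? = some x := by
  have hx₂ : υ (υ x) ∉ L := fun hmem => hx (hυ x ▸ h.tracks_u.mem hmem)
  have hx₁ : υ x ∉ L := fun hmem => hx₂ (h.tracks_u.mem hmem)
  by_cases hfix : υ x = x
  · refine ⟨[(none, t.length)], by simp [Table.uCycles], [x], ?_, by simp [← h.length_eq]⟩
    exact h.append (h.nodup.append (List.nodup_singleton x) (by simpa using hx))
      (by simp [RowAt, ← h.length_eq, hfix])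
  · have hfix₁ : υ (υ x) ≠ υ x := fun h₁ => hfix (by simpa only [h₁] using hυ x)
    have hfix₂ : υ (υ x) ≠ x := fun h₂ => hfix (by simpa only [h₂] using hυ x)
    refine ⟨[(none, t.length + 1), (none, t.length + 2), (none, t.length)],
      by simp [Table.uCycles], [x, υ x, υ (υ x)], ?_, by simp [← h.length_eq]⟩
    refine h.append (h.nodup.append ?_ ?_) (by simp [RowAt, ← h.length_eq, hυ])
    · simp [hfix₁.symm, hfix₂.symm, Ne.symm hfix]
    · simp [hx, hx₁, hx₂]

theorem Labels.exists_children (hσ : Function.Involutive σ) (hυ : ∀ x, υ (υ (υ x)) = x)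
    (h : Labels σ υ t L) {i : ℕ} (hi : i < t.length) :
    ∃ t' ∈ t.children i, ∃ L', Labels σ υ t' L' := by
  obtain ⟨x, hx⟩ : ∃ x, L[i]? = some x := ⟨_, List.getElem?_eq_getElem (h.length_eq ▸ hi)⟩
  by_cases hmem : σ x ∈ L
  · obtain ⟨j, hj⟩ := List.mem_iff_getElem?.1 hmem
    obtain ⟨r, hr, hrow⟩ := h.exists_row hj
    have hadm : ∀ k ∈ r.1, k = i := fun k hk => index_inj h.nodup (hσ x ▸ hrow.1 k hk) hx
    refine ⟨t.link i j, List.mem_append_left _ (List.mem_map_of_mem (List.mem_filter.2 ⟨?_, ?_⟩)),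
      L, h.link hσ hx hj⟩
    · exact List.mem_range.2 (List.getElem?_eq_some_iff.1 hr).1
    · simpa [hr] using hadm
  · obtain ⟨b, hb, M, h', hm⟩ := exists_labels_append_uCycle hυ h hmem
    have hx' : (L ++ M)[i]? = some x := by
      rw [List.getElem?_append_left (h.length_eq ▸ hi), hx]
    exact ⟨_, List.mem_append_right _ (List.mem_map_of_mem hb), _, h'.link hσ hx' hm⟩

theorem Labels.weight_le [Finite X] (h : Labels σ υ t L) :
    t.weight ≤ Nat.card X + 3 * Nat.card {x // σ x = x} + 2 * Nat.card {x // υ x = x} := by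
  have hlen : L.length ≤ Nat.card X := by
    have := Fintype.ofFinite X
    exact Nat.card_eq_fintype_card (α := X) ▸ h.nodup.length_le_card
  have hs : fixCount t.s L.length ≤ Nat.card {x // σ x = x} :=
    count_le_card h.nodup fun _ _ hx => h.apply_eq_of_s_eq hx
  have hu : fixCount t.u L.length ≤ Nat.card {x // υ x = x} :=
    count_le_card h.nodup fun _ _ hx => (h.tracks_u.apply_eq_iff h.nodup hx).1
  rw [Table.weight, ← h.length_eq]
  gcongr

theorem Labels.exists_step [Finite X] {N : ℕ} (hσ : Function.Involutive σ)
    (hυ : ∀ x, υ (υ (υ x)) = x)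
    (hN : Nat.card X + 3 * Nat.card {x // σ x = x} + 2 * Nat.card {x // υ x = x} ≤ N)
    (h : Labels σ υ t L) : ∃ t' ∈ t.step N, ∃ L', Labels σ υ t' L' := by
  unfold Table.step
  split
  next => exact ⟨t, List.mem_singleton_self t, L, h⟩
  next i hi =>
    obtain ⟨hlt, -⟩ := List.findIdx?_eq_some_iff_getElem.1 hi
    obtain ⟨t', ht', L', h'⟩ := h.exists_children hσ hυ hlt
    exact ⟨t', List.mem_filter.2 ⟨ht', decide_eq_true (h'.weight_le.trans hN)⟩, L', h'⟩

theorem exists_mem_search_labels [Finite X] [Nonempty X] {N : ℕ} (hσ : Function.Involutive σ)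
    (hυ : ∀ x, υ (υ (υ x)) = x)
    (hN : Nat.card X + 3 * Nat.card {x // σ x = x} + 2 * Nat.card {x // υ x = x} ≤ N) (k : ℕ) :
    ∃ t ∈ Table.search N k, ∃ L, Labels σ υ t L := by
  induction k with
  | zero =>
    obtain ⟨b, hb, M, h, -⟩ := exists_labels_append_uCycle hυ (σ := σ) (t := []) (L := [])
      ⟨List.nodup_nil, .nil⟩ (List.not_mem_nil (a := Classical.arbitrary X))
    exact ⟨b, hb, M, h⟩
  | succ k ih =>
    obtain ⟨t, ht, L, h⟩ := ih
    obtain ⟨t', ht', h'⟩ := h.exists_step hσ hυ hN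
    exact ⟨t', List.mem_flatMap.2 ⟨t, ht, ht'⟩, h'⟩

end Search

section Tabulation

variable {X Y : Type*} [MulAction PSL2Z X] [MulAction PSL2Z Y] {t : Table} {L : List X} {M : List Y}

theorem Tracks.smul_mul {f g : ℕ → ℕ} {a b : PSL2Z} (hf : Tracks L f (a • ·))
    (hg : Tracks L g (b • ·)) : Tracks L (f ∘ g) ((a * b) • ·) := by
  simpa only [Function.comp_def, smul_smul] using hf.comp hg

theorem Tracks.smul_pow {f : ℕ → ℕ} {a : PSL2Z} (hf : Tracks L f (a • ·)) (k : ℕ) :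
    Tracks L f^[k] (a ^ k • ·) := by
  simpa only [smul_iterate] using hf.iterate k

theorem induction_Sp_Up {P : PSL2Z → Prop} (one : P 1) (mul_S : ∀ g, P g → P (Sp * g))
    (mul_U : ∀ g, P g → P (Up * g)) (g : PSL2Z) : P g :=
  closure_pair_induction Sp_mul_Sp Up_pow_three one mul_S mul_U (closure_Sp_Up ▸ Subgroup.mem_top g)

namespace Labels

theorem exists_getElem?_eq_smul (ht : t.IsComplete) (hL : Labels (Sp • ·) (Up • ·) t L)
    (hM : Labels (Sp • ·) (Up • ·) t M) {i : ℕ} {x : X} {y : Y} (hx : L[i]? = some x)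
    (hy : M[i]? = some y) (g : PSL2Z) :
    ∃ j : ℕ, L[j]? = some (g • x) ∧ M[j]? = some (g • y) := by
  induction g using induction_Sp_Up with
  | one => exact ⟨i, by rw [one_smul, hx], by rw [one_smul, hy]⟩
  | mul_S g ih =>
    obtain ⟨j, hLj, hMj⟩ := ih
    simp only [mul_smul]
    exact ⟨t.s j, hL.tracks_s ht hLj, hM.tracks_s ht hMj⟩
  | mul_U g ih =>
    obtain ⟨j, hLj, hMj⟩ := ih
    simp only [mul_smul]
    exact ⟨t.u j, hL.tracks_u hLj, hM.tracks_u hMj⟩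

theorem stabilizer_eq (ht : t.IsComplete) (hL : Labels (Sp • ·) (Up • ·) t L)
    (hM : Labels (Sp • ·) (Up • ·) t M) {i : ℕ} {x : X} {y : Y} (hx : L[i]? = some x)
    (hy : M[i]? = some y) : MulAction.stabilizer PSL2Z x = MulAction.stabilizer PSL2Z y := by
  ext g
  obtain ⟨j, hLj, hMj⟩ := exists_getElem?_eq_smul ht hL hM hx hy g
  rw [MulAction.mem_stabilizer_iff, MulAction.mem_stabilizer_iff]
  constructor
  · intro h
    obtain rfl := index_inj hL.nodup hx (h ▸ hLj)
    exact Option.some_injective _ (hMj.symm.trans hy)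
  · intro h
    obtain rfl := index_inj hM.nodup hy (h ▸ hMj)
    exact Option.some_injective _ (hLj.symm.trans hx)

theorem mem_of_isPretransitive [MulAction.IsPretransitive PSL2Z X] (ht : t.IsComplete)
    (ht₀ : t ≠ []) (h : Labels (Sp • ·) (Up • ·) t L) (x : X) : x ∈ L := by
  obtain ⟨y, hy⟩ : ∃ y, L[0]? = some y :=
    ⟨_, List.getElem?_eq_getElem (h.length_eq ▸ List.length_pos_iff.2 ht₀)⟩
  obtain ⟨g, rfl⟩ := MulAction.exists_smul_eq PSL2Z y x
  obtain ⟨j, hj, -⟩ := exists_getElem?_eq_smul ht h h hy hy g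
  exact List.mem_of_getElem? hj

end Labels

/-- The complete table `t` describes the actions of `S` and `U` on a nonempty invariant set of
points of `X`, under some numbering of these points; for transitive `X` these are all points. -/
structure Tabulates (t : Table) (X : Type*) [MulAction PSL2Z X] : Prop where
  isComplete : t.IsComplete
  ne_nil : t ≠ []
  exists_labels : ∃ L : List X, Labels (Sp • ·) (Up • ·) t L

namespace Tabulates

theorem exists_labels_forall_mem [MulAction.IsPretransitive PSL2Z X] (h : Tabulates t X) :
    ∃ L : List X, Labels (Sp • ·) (Up • ·) t L ∧ ∀ x, x ∈ L :=
  have ⟨L, hL⟩ := h.exists_labels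
  ⟨L, hL, hL.mem_of_isPretransitive h.isComplete h.ne_nil⟩

theorem relabel {r : Table} {ψ : List ℕ} (h : Tabulates t X) (hr : r.IsComplete) (hr₀ : r ≠ [])
    (hψ : Labels t.s t.u r ψ) (hlt : ∀ k ∈ ψ, k < t.length) : Tabulates r X := by
  obtain ⟨L, hL⟩ := h.exists_labels
  obtain ⟨x₀, -⟩ := List.exists_mem_of_length_pos (hL.length_eq ▸ List.length_pos_iff.2 h.ne_nil)
  let f (k : ℕ) : X := L[k]?.getD x₀
  have hf {k : ℕ} {x : X} (hk : L[k]? = some x) : f k = x := by simp only [f, hk, Option.getD_some]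
  have hf' (k : ℕ) (hk : k ∈ ψ) : L[k]? = some (f k) := by
    obtain ⟨x, hx⟩ : ∃ x, L[k]? = some x := ⟨_, List.getElem?_eq_getElem (hL.length_eq ▸ hlt k hk)⟩
    rw [hf hx, hx]
  refine ⟨hr, hr₀, ψ.map f, hψ.map ?_ ?_ ?_⟩
  · exact fun j hj k hk hjk => index_inj hL.nodup (hf' j hj) (hjk ▸ hf' k hk)
  · exact fun k hk => hf (hL.tracks_s h.isComplete (hf' k hk))
  · exact fun k hk => hf (hL.tracks_u (hf' k hk))

theorem quotient_stabilizer [MulAction.IsPretransitive PSL2Z X] (h : Tabulates t X) (x : X) :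
    Tabulates t (PSL2Z ⧸ MulAction.stabilizer PSL2Z x) := by
  let e := Equiv.ofBijective (MulAction.ofQuotientStabilizer PSL2Z x)
    ⟨MulAction.injective_ofQuotientStabilizer PSL2Z x,
      fun y => have ⟨g, hg⟩ := MulAction.exists_smul_eq PSL2Z x y; ⟨g, hg⟩⟩
  have he (g : PSL2Z) (y : X) : e.symm (g • y) = g • e.symm y := by
    rw [Equiv.symm_apply_eq]
    exact (congrArg (g • ·) (e.apply_symm_apply y).symm).trans
      (MulAction.ofQuotientStabilizer_smul PSL2Z x g (e.symm y)).symm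
  obtain ⟨L, hL⟩ := h.exists_labels
  exact ⟨h.isComplete, h.ne_nil, L.map e.symm,
    hL.map e.symm.injective.injOn (fun y _ => he Sp y) fun y _ => he Up y⟩

end Tabulates

theorem stabilizer_smul_one (g : PSL2Z) (Γ : Subgroup PSL2Z) :
    MulAction.stabilizer PSL2Z (g • ((1 : PSL2Z) : PSL2Z ⧸ Γ)) =
      Γ.map (MulAut.conj g).toMonoidHom := by
  rw [MulAction.stabilizer_smul_eq_stabilizer_map_conj, MulAction.stabilizer_quotient]

namespace Tabulates

variable {Γ Δ : Subgroup PSL2Z}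

theorem of_subgroupConj (h : Tabulates t (PSL2Z ⧸ Γ)) (hconj : SubgroupConj Γ Δ) :
    Tabulates t (PSL2Z ⧸ Δ) := by
  obtain ⟨g, rfl⟩ := hconj
  rw [← stabilizer_smul_one]
  exact h.quotient_stabilizer _

theorem subgroupConj (hΓ : Tabulates t (PSL2Z ⧸ Γ)) (hΔ : Tabulates t (PSL2Z ⧸ Δ)) :
    SubgroupConj Γ Δ := by
  obtain ⟨L, hL, -⟩ := hΓ.exists_labels_forall_mem
  obtain ⟨M, hM, hmem⟩ := hΔ.exists_labels_forall_mem
  obtain ⟨i, hi⟩ := List.mem_iff_getElem?.1 (hmem (1 : PSL2Z))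
  obtain ⟨x, hx⟩ : ∃ x, L[i]? = some x :=
    ⟨_, List.getElem?_eq_getElem
      (hL.length_eq ▸ hM.length_eq ▸ (List.getElem?_eq_some_iff.1 hi).1)⟩
  obtain ⟨g, rfl⟩ := MulAction.exists_smul_eq PSL2Z ((1 : PSL2Z) : PSL2Z ⧸ Γ) x
  refine ⟨g, ?_⟩
  rw [← stabilizer_smul_one, hL.stabilizer_eq hΓ.isComplete hM hx hi, MulAction.stabilizer_quotient]

end Tabulates

end Tabulation

section Invariants

namespace Table

/-- The conditions on a table to describe a transitive action of `PSL(2,ℤ)` on its rows. They are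
numbered in the order of their discovery from row `0`: every other row is the successor of the
preceding one in a cycle of `U`, or the image of an earlier one under `S`. -/
def IsValid (t : Table) : Prop :=
  t ≠ [] ∧ t.IsComplete ∧ ∀ i < t.length, (t.s i < t.length ∧ t.u i < t.length) ∧
    (t.s (t.s i) = i ∧ t.u (t.u (t.u i)) = i) ∧ (i = 0 ∨ t.u (i - 1) = i ∨ t.s i < i)

instance (t : Table) : Decidable t.IsValid := inferInstanceAs (Decidable (_ ∧ _))

/-- The numbers of fixed points of `1`, `T ^ 4`, `T ^ 3` and `T * T * R * T * R * R`, where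
`R = S * U * U`, in the action described by a table. These numbers tell the tables of `reps` apart.
-/
def signature (t : Table) : ℕ × ℕ × ℕ × ℕ :=
  let T := t.s ∘ t.u
  let R := t.s ∘ t.u ∘ t.u
  (t.length, fixCount T^[4] t.length, fixCount T^[3] t.length,
    fixCount (T ∘ T ∘ R ∘ T ∘ R ∘ R) t.length)

/-- The conditions of genus zero and weight `12`, read off the table of the action on cosets. -/
def IsK12 (t : Table) : Prop :=
  t.weight = 12 ∧ orbCount t.s t.length + orbCount t.u t.length + orbCount (t.s ∘ t.u) t.length =
    t.length + 2

instance (t : Table) : Decidable t.IsK12 := inferInstanceAs (Decidable (_ ∧ _))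

theorem labels_finRange {t : Table} {σ υ : Fin t.length → Fin t.length}
    (hσ : ∀ i, (σ i : ℕ) = t.s i) (hυ : ∀ i, (υ i : ℕ) = t.u i) :
    Labels σ υ t (List.finRange t.length) := by
  have getElem?_eq {j : ℕ} {k : Fin t.length} (h : k = j) : (List.finRange t.length)[j]? = some k :=
    h ▸ by simp
  refine ⟨List.nodup_finRange _, List.forall₂_iff_get.2 ⟨List.length_finRange, fun i _ hi => ?_⟩⟩
  have hget : (List.finRange t.length)[i] = ⟨i, hi⟩ := List.getElem_finRange _
  simp only [List.get_eq_getElem, hget]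
  have hrow : t[i]? = some t[i] := List.getElem?_eq_getElem hi
  constructor
  · intro j hj
    have hrow' : t[i]? = some (some j, t[i].2) := hrow.trans (congrArg some (Prod.ext hj rfl))
    exact getElem?_eq (by simp only [hσ, Table.s, hrow'])
  · exact getElem?_eq (by simp only [hυ, Table.u, hrow])

namespace IsValid

variable {t : Table}

theorem exists_hom_perm (ht : t.IsValid) : ∃ f : PSL2Z →* Equiv.Perm (Fin t.length),
    ∀ i, (f Sp i : ℕ) = t.s i ∧ (f Up i : ℕ) = t.u i := by
  obtain ⟨-, -, h⟩ := ht
  let s : Equiv.Perm (Fin t.length) := Function.Involutive.toPerm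
    (fun i => ⟨t.s i, (h i i.2).1.1⟩) fun i => Fin.ext (h i i.2).2.1.1
  let υ (i : Fin t.length) : Fin t.length := ⟨t.u i, (h i i.2).1.2⟩
  have hυ (i : Fin t.length) : υ (υ (υ i)) = i := Fin.ext (h i i.2).2.1.2
  let u : Equiv.Perm (Fin t.length) := ⟨υ, υ ∘ υ, hυ, hυ⟩
  obtain ⟨f, hs, hu⟩ := exists_hom (s := s) (u := u)
    (Equiv.ext fun i => Fin.ext (h i i.2).2.1.1) (Equiv.ext hυ)
  exact ⟨f, fun i => ⟨by rw [hs]; rfl, by rw [hu]; rfl⟩⟩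

theorem exists_apply_eq (ht : t.IsValid) {f : PSL2Z →* Equiv.Perm (Fin t.length)}
    (hf : ∀ i, (f Sp i : ℕ) = t.s i ∧ (f Up i : ℕ) = t.u i) (i₀ : Fin t.length)
    (hi₀ : (i₀ : ℕ) = 0) (i : Fin t.length) : ∃ g, f g i₀ = i := by
  obtain ⟨-, -, h⟩ := ht
  obtain ⟨i, hi⟩ := i
  induction i using Nat.strong_induction_on with
  | _ i ih =>
    obtain ⟨⟨hs, -⟩, ⟨hss, -⟩, rfl | hu | hlt⟩ := h i hi
    · exact ⟨1, Fin.ext (by simpa using hi₀)⟩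
    · obtain rfl | hpos := i.eq_zero_or_pos
      · exact ⟨1, Fin.ext (by simpa using hi₀)⟩
      · obtain ⟨g, hg⟩ := ih (i - 1) (Nat.sub_lt hpos one_pos) (by omega)
        exact ⟨Up * g, Fin.ext (by rw [map_mul, Equiv.Perm.mul_apply, hg, (hf _).2, hu])⟩
    · obtain ⟨g, hg⟩ := ih (t.s i) hlt hs
      exact ⟨Sp * g, Fin.ext (by rw [map_mul, Equiv.Perm.mul_apply, hg, (hf _).1, hss])⟩

theorem exists_tabulates (ht : t.IsValid) : ∃ Γ : Subgroup PSL2Z, Tabulates t (PSL2Z ⧸ Γ) := by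
  obtain ⟨f, hf⟩ := ht.exists_hom_perm
  let i₀ : Fin t.length := ⟨0, List.length_pos_iff.2 ht.1⟩
  let _ : MulAction PSL2Z (Fin t.length) := MulAction.compHom _ f
  have : MulAction.IsPretransitive PSL2Z (Fin t.length) :=
    (MulAction.isPretransitive_iff_base i₀).2 (ht.exists_apply_eq hf i₀ rfl)
  have htab : Tabulates t (Fin t.length) :=
    ⟨ht.2.1, ht.1, _, labels_finRange (fun i => (hf i).1) fun i => (hf i).2⟩
  exact ⟨_, htab.quotient_stabilizer i₀⟩

end IsValid

end Table

namespace Tabulates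

variable {t t' : Table} {Γ : Subgroup PSL2Z}

theorem exists_tracks (h : Tabulates t (PSL2Z ⧸ Γ)) : ∃ L : List (PSL2Z ⧸ Γ), L.Nodup ∧
    (∀ x, x ∈ L) ∧ L.length = t.length ∧ Tracks L t.s (Sp • ·) ∧ Tracks L t.u (Up • ·) ∧
    Tracks L (t.s ∘ t.u) (Tp • ·) := by
  obtain ⟨L, hL, hmem⟩ := h.exists_labels_forall_mem
  have hs := hL.tracks_s h.isComplete
  exact ⟨L, hL.nodup, hmem, hL.length_eq, hs, hL.tracks_u, Sp_mul_Up ▸ hs.smul_mul hL.tracks_u⟩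

theorem length_eq_index (h : Tabulates t (PSL2Z ⧸ Γ)) : t.length = Γ.index := by
  classical
  obtain ⟨L, hL, hmem, hlen, -⟩ := h.exists_tracks
  rw [← hlen, Subgroup.index, ← Nat.card_congr (hL.getEquivOfForallMemList L hmem), Nat.card_fin]

theorem index_ne_zero (h : Tabulates t (PSL2Z ⧸ Γ)) : Γ.index ≠ 0 :=
  h.length_eq_index ▸ List.length_eq_zero_iff.not.2 h.ne_nil

theorem fixCount_s_eq (h : Tabulates t (PSL2Z ⧸ Γ)) : fixCount t.s t.length = nFix Sp Γ := by
  obtain ⟨L, hL, hmem, hlen, hs, -⟩ := h.exists_tracks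
  exact hlen ▸ hs.fixCount_eq hL hmem

theorem fixCount_u_eq (h : Tabulates t (PSL2Z ⧸ Γ)) : fixCount t.u t.length = nFix Up Γ := by
  obtain ⟨L, hL, hmem, hlen, -, hu, -⟩ := h.exists_tracks
  exact hlen ▸ hu.fixCount_eq hL hmem

theorem isK12_iff (h : Tabulates t (PSL2Z ⧸ Γ)) : t.IsK12 ↔ GenusZero Γ ∧ tfIdx Γ = 12 := by
  obtain ⟨L, hL, hmem, hlen, hs, hu, hT⟩ := h.exists_tracks
  have hs' : orbCount t.s t.length = nOrb Sp Γ := hlen ▸ hs.orbCount_eq hL hmem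
  have hu' : orbCount t.u t.length = nOrb Up Γ := hlen ▸ hu.orbCount_eq hL hmem
  have hT' : orbCount (t.s ∘ t.u) t.length = nOrb Tp Γ := hlen ▸ hT.orbCount_eq hL hmem
  rw [Table.IsK12, Table.weight, h.fixCount_s_eq, h.fixCount_u_eq, hs', hu', hT',
    h.length_eq_index, and_comm]
  rfl

theorem signature_eq (h : Tabulates t (PSL2Z ⧸ Γ)) (h' : Tabulates t' (PSL2Z ⧸ Γ)) :
    t.signature = t'.signature := by
  let R := Sp * (Up * Up)
  suffices ∀ t, Tabulates t (PSL2Z ⧸ Γ) → t.signature = (Γ.index, nFix (Tp ^ 4) Γ, nFix (Tp ^ 3) Γ,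
      nFix (Tp * (Tp * (R * (Tp * (R * R))))) Γ) by
    rw [this t h, this t' h']
  intro t h
  obtain ⟨L, hL, hmem, hlen, hs, hu, hT⟩ := h.exists_tracks
  have hR : Tracks L (t.s ∘ t.u ∘ t.u) (R • ·) := hs.smul_mul (hu.smul_mul hu)
  have hfix {f : ℕ → ℕ} {g : PSL2Z} (hf : Tracks L f (g • ·)) : fixCount f t.length = nFix g Γ :=
    hlen ▸ hf.fixCount_eq hL hmem
  rw [Table.signature, hfix (hT.smul_pow 4), hfix (hT.smul_pow 3),
    hfix (hT.smul_mul (hT.smul_mul (hR.smul_mul (hT.smul_mul (hR.smul_mul hR))))),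
    h.length_eq_index]

end Tabulates

theorem countClasses_tabulates {l : List Table} (hvalid : ∀ t ∈ l, t.IsValid)
    (hsig : (l.map Table.signature).Nodup) :
    countClasses (fun Γ => ∃ t ∈ l, Tabulates t (PSL2Z ⧸ Γ)) = l.length := by
  have hcard : Nat.card {t // t ∈ l} = l.length := by
    classical
    rw [← Nat.card_congr (hsig.of_map.getEquiv l), Nat.card_fin]
  have table_inj {t t' : Table} {Γ : Subgroup PSL2Z} (ht : t ∈ l) (ht' : t' ∈ l)
      (h : Tabulates t (PSL2Z ⧸ Γ)) (h' : Tabulates t' (PSL2Z ⧸ Γ)) : t = t' :=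
    List.inj_on_of_nodup_map hsig ht ht' (h.signature_eq h')
  choose table hmem htab using
    fun Γ : {Γ : Subgroup PSL2Z // ∃ t ∈ l, Tabulates t (PSL2Z ⧸ Γ)} => Γ.2
  rw [countClasses, ← hcard]
  refine Nat.card_congr (Equiv.ofBijective
    (Quot.lift (fun Γ => ⟨table Γ, hmem Γ⟩) fun Γ Δ hconj => ?_) ⟨?_, ?_⟩)
  · exact Subtype.ext (table_inj (hmem Γ) (hmem Δ) ((htab Γ).of_subgroupConj hconj) (htab Δ))
  · rintro ⟨Γ⟩ ⟨Δ⟩ h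
    have h : table Γ = table Δ := congrArg Subtype.val h
    exact Quot.sound ((htab Γ).subgroupConj (h ▸ htab Δ))
  · rintro ⟨t, ht⟩
    obtain ⟨Γ, hΓ⟩ := (hvalid t ht).exists_tabulates
    exact ⟨Quot.mk _ ⟨Γ, t, ht, hΓ⟩, Subtype.ext (table_inj (hmem _) ht (htab _) hΓ)⟩

end Invariants

section Classification

namespace Table

/-- The members of the cycle of `U` through the row `i`. -/
def uCycle (t : Table) (i : ℕ) : List ℕ := if t.u i = i then [i] else [i, t.u i, t.u (t.u i)]

/-- The rows of `t` in the order of their discovery from the row `j`, where each step appends the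
cycle of `U` through the image under `S` of the next row on the list, unless it is present. -/
def discover (t : Table) (j : ℕ) : List ℕ :=
  (List.range t.length).foldl
    (fun φ k =>
      match φ[k]? with
      | none => φ
      | some i => if t.s i ∈ φ then φ else φ ++ t.uCycle (t.s i))
    (t.uCycle j)

/-- The complete table with images `S` under the involution and images `U` under the permutation of
order three. -/
def ofLists (S U : List ℕ) : Table := (S.map some).zip U

end Table

/-- The tables of the subgroups of genus zero and weight `12`, one for each conjugacy class. They
were found by the search that `exists_relabelling_of_mem_search` repeats. -/
def k12Tables : List Table :=
  open Table in [
     .ofLists [1, 0, 2, 3] [0, 2, 3, 1],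
     .ofLists [1, 0, 2, 4, 3] [0, 2, 3, 1, 4],
     .ofLists [1, 0, 2, 4, 3, 6, 5] [0, 2, 3, 1, 5, 6, 4],
     .ofLists [1, 0, 4, 5, 2, 3] [0, 2, 3, 1, 4, 5],
     .ofLists [1, 0, 4, 5, 2, 3, 7, 6] [0, 2, 3, 1, 4, 6, 7, 5],
     .ofLists [1, 0, 4, 3, 2, 6, 5] [0, 2, 3, 1, 5, 6, 4],
     .ofLists [1, 0, 4, 5, 2, 3, 6] [0, 2, 3, 1, 5, 6, 4],
     .ofLists [1, 0, 4, 5, 2, 3, 7, 6] [0, 2, 3, 1, 5, 6, 4, 7],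
     .ofLists [1, 0, 4, 5, 2, 3, 7, 6, 9, 8] [0, 2, 3, 1, 5, 6, 4, 8, 9, 7],
     .ofLists [1, 0, 4, 6, 2, 5, 3] [0, 2, 3, 1, 5, 6, 4],
     .ofLists [1, 0, 4, 6, 2, 7, 3, 5] [0, 2, 3, 1, 5, 6, 4, 7],
     .ofLists [1, 0, 4, 6, 2, 7, 3, 5, 9, 8] [0, 2, 3, 1, 5, 6, 4, 8, 9, 7],
     .ofLists [1, 0, 4, 7, 2, 6, 5, 3, 9, 8] [0, 2, 3, 1, 5, 6, 4, 8, 9, 7],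
     .ofLists [1, 0, 4, 7, 2, 9, 8, 3, 6, 5] [0, 2, 3, 1, 5, 6, 4, 8, 9, 7],
     .ofLists [0, 1, 2] [1, 2, 0],
     .ofLists [0, 1, 3, 2, 5, 4] [1, 2, 0, 4, 5, 3],
     .ofLists [0, 3, 4, 1, 2, 5] [1, 2, 0, 4, 5, 3],
     .ofLists [0, 3, 4, 1, 2, 6, 5, 8, 7] [1, 2, 0, 4, 5, 3, 7, 8, 6],
     .ofLists [0, 3, 5, 1, 4, 2] [1, 2, 0, 4, 5, 3],
     .ofLists [0, 3, 5, 1, 6, 2, 4, 8, 7] [1, 2, 0, 4, 5, 3, 7, 8, 6],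
     .ofLists [0, 3, 6, 1, 5, 4, 2, 8, 7] [1, 2, 0, 4, 5, 3, 7, 8, 6],
     .ofLists [0, 3, 6, 1, 8, 7, 2, 5, 4] [1, 2, 0, 4, 5, 3, 7, 8, 6],
     .ofLists [1, 0, 3, 2, 6, 7, 4, 5, 9, 8, 11, 10] [1, 2, 0, 4, 5, 3, 7, 8, 6, 10, 11, 9],
     .ofLists [1, 0, 3, 2, 6, 8, 4, 9, 5, 7, 11, 10] [1, 2, 0, 4, 5, 3, 7, 8, 6, 10, 11, 9],
     .ofLists [1, 0, 3, 2, 6, 9, 4, 8, 7, 5, 11, 10] [1, 2, 0, 4, 5, 3, 7, 8, 6, 10, 11, 9],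
     .ofLists [1, 0, 3, 2, 6, 9, 4, 11, 10, 5, 8, 7] [1, 2, 0, 4, 5, 3, 7, 8, 6, 10, 11, 9],
     .ofLists [3, 5, 6, 0, 9, 1, 2, 11, 10, 4, 8, 7] [1, 2, 0, 4, 5, 3, 7, 8, 6, 10, 11, 9],
     .ofLists [3, 6, 9, 0, 11, 7, 1, 5, 10, 2, 8, 4] [1, 2, 0, 4, 5, 3, 7, 8, 6, 10, 11, 9]]

theorem k12Tables_isValid : ∀ t ∈ k12Tables, t.IsValid := by
  decide +kernel

theorem k12Tables_isK12 : ∀ t ∈ k12Tables, t.IsK12 := by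
  decide +kernel

theorem k12Tables_signature_nodup : (k12Tables.map Table.signature).Nodup := by
  decide +kernel

-- The equality of lengths is implied by the rest; it spares the evaluation of most candidates `r`.
set_option maxRecDepth 10000 in
theorem exists_relabelling_of_mem_search : ∀ t ∈ Table.search 12 6, (t ≠ [] ∧ t.IsComplete) ∧
    (t.IsK12 → ∃ r ∈ k12Tables, r.length = t.length ∧ ∃ j < t.length,
      Labels t.s t.u r (t.discover j) ∧ ∀ k ∈ t.discover j, k < t.length) := by
  decide +kernel

theorem exists_mem_search_tabulates {Γ : Subgroup PSL2Z} (hΓ : Γ.index ≠ 0)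
    (hweight : tfIdx Γ = 12) : ∃ t ∈ Table.search 12 6, Tabulates t (PSL2Z ⧸ Γ) := by
  have : Γ.FiniteIndex := ⟨hΓ⟩
  obtain ⟨t, ht, hL⟩ := exists_mem_search_labels (X := PSL2Z ⧸ Γ) (σ := (Sp • ·)) (υ := (Up • ·))
    (fun x => by simp only [smul_smul, Sp_mul_Sp, one_smul])
    (fun x => by simp only [smul_smul, ← pow_three, Up_pow_three, one_smul]) hweight.le 6
  obtain ⟨⟨ht₀, hcomplete⟩, -⟩ := exists_relabelling_of_mem_search t ht
  exact ⟨t, ht, hcomplete, ht₀, hL⟩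

theorem exists_mem_k12Tables_tabulates_iff {Γ : Subgroup PSL2Z} :
    (∃ t ∈ k12Tables, Tabulates t (PSL2Z ⧸ Γ)) ↔
      Γ.index ≠ 0 ∧ GenusZero Γ ∧ tfIdx Γ = 12 := by
  constructor
  · rintro ⟨t, ht, h⟩
    exact ⟨h.index_ne_zero, h.isK12_iff.1 (k12Tables_isK12 t ht)⟩
  · rintro ⟨hΓ, hgenus, hweight⟩
    obtain ⟨t, ht, h⟩ := exists_mem_search_tabulates hΓ hweight
    obtain ⟨r, hr, -, j, -, hlabels, hlt⟩ :=
      (exists_relabelling_of_mem_search t ht).2 (h.isK12_iff.2 ⟨hgenus, hweight⟩)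
    obtain ⟨hr₀, hcomplete, -⟩ := k12Tables_isValid r hr
    exact ⟨r, hr, h.relabel hcomplete hr₀ hlabels hlt⟩

theorem countClasses_eq_countP {P : Subgroup PSL2Z → Prop} (Q : ℕ → ℕ → Prop)
    [∀ a b, Decidable (Q a b)] (hP : ∀ Γ, P Γ ↔
      (Γ.index ≠ 0 ∧ GenusZero Γ ∧ tfIdx Γ = 12) ∧ Q (nFix Sp Γ) (nFix Up Γ)) :
    countClasses P =
      k12Tables.countP fun t => Q (fixCount t.s t.length) (fixCount t.u t.length) := by
  let q (t : Table) : Bool := Q (fixCount t.s t.length) (fixCount t.u t.length)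
  have hq {t : Table} {Γ : Subgroup PSL2Z} (h : Tabulates t (PSL2Z ⧸ Γ)) :
      q t ↔ Q (nFix Sp Γ) (nFix Up Γ) := by
    rw [decide_eq_true_eq, h.fixCount_s_eq, h.fixCount_u_eq]
  have hPq : P = fun Γ => ∃ t ∈ k12Tables.filter q, Tabulates t (PSL2Z ⧸ Γ) := by
    funext Γ
    simp only [hP, ← exists_mem_k12Tables_tabulates_iff, List.mem_filter, eq_iff_iff]
    constructor
    · rintro ⟨⟨t, ht, h⟩, hQ⟩
      exact ⟨t, ⟨ht, (hq h).2 hQ⟩, h⟩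
    · rintro ⟨t, ⟨ht, hqt⟩, h⟩
      exact ⟨⟨t, ht, h⟩, (hq h).1 hqt⟩
  rw [hPq, countClasses_tabulates, List.countP_eq_length_filter]
  · exact fun t ht => k12Tables_isValid t (List.mem_of_mem_filter ht)
  · exact k12Tables_signature_nodup.sublist (List.filter_sublist.map _)

end Classification

/-- There are exactly 28 conjugacy classes of genus-zero finite-index subgroups `Γ` of
`PSL(2,ℤ)` with `n + 3e₂ + 2e₃ = 12`; among them exactly 6 are torsion free, 14 have
`e₂ > 0`, 4 have `e₂ = 0, e₃ = 1`, 3 have `e₂ = 0, e₃ = 2`, and 1 has `e₂ = 0, e₃ = 3`. -/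
theorem count_K12 :
    countClasses (fun Γ => Γ.index ≠ 0 ∧ GenusZero Γ ∧ tfIdx Γ = 12) = 28 ∧
    countClasses (fun Γ => Γ.index ≠ 0 ∧ GenusZero Γ ∧ tfIdx Γ = 12 ∧ TorsionFree Γ) = 6 ∧
    countClasses (fun Γ => Γ.index ≠ 0 ∧ GenusZero Γ ∧ tfIdx Γ = 12 ∧ 0 < nFix Sp Γ) = 14 ∧
    countClasses (fun Γ => Γ.index ≠ 0 ∧ GenusZero Γ ∧ tfIdx Γ = 12 ∧
      nFix Sp Γ = 0 ∧ nFix (Sp * Tp) Γ = 1) = 4 ∧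
    countClasses (fun Γ => Γ.index ≠ 0 ∧ GenusZero Γ ∧ tfIdx Γ = 12 ∧
      nFix Sp Γ = 0 ∧ nFix (Sp * Tp) Γ = 2) = 3 ∧
    countClasses (fun Γ => Γ.index ≠ 0 ∧ GenusZero Γ ∧ tfIdx Γ = 12 ∧
      nFix Sp Γ = 0 ∧ nFix (Sp * Tp) Γ = 3) = 1 := by
  refine ⟨?_, ?_, ?_, ?_, ?_, ?_⟩
  · exact (countClasses_eq_countP (fun _ _ => True) (by simp)).trans (by decide +kernel)
  · refine (countClasses_eq_countP (fun e₂ e₃ => e₂ = 0 ∧ e₃ = 0) fun Γ => ?_).trans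
      (by decide +kernel)
    rw [and_assoc, and_assoc]
    exact and_congr_right fun hΓ => by rw [torsionFree_iff hΓ]
  · exact (countClasses_eq_countP (fun e₂ _ => 0 < e₂) (by simp [and_assoc])).trans
      (by decide +kernel)
  · exact (countClasses_eq_countP (fun e₂ e₃ => e₂ = 0 ∧ e₃ = 1) (by simp [and_assoc, Up])).trans
      (by decide +kernel)
  · exact (countClasses_eq_countP (fun e₂ e₃ => e₂ = 0 ∧ e₃ = 2) (by simp [and_assoc, Up])).trans
      (by decide +kernel)
  · exact (countClasses_eq_countP (fun e₂ e₃ => e₂ = 0 ∧ e₃ = 3) (by simp [and_assoc, Up])).trans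
      (by decide +kernel)
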